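/- Let a = {aₙ} be a non-increasing, summable sequence of positive real numbers with tails rₙ^{(a)} = Σ_{j≥n} aⱼ, and let C_a be the associated Cantor set. For any dimension function h: P^h(C_a) = 0 if and only if limsup_{n→∞} n·h(rₙ^{(a)}/n) = 0; P^h(C_a) = ∞ if and only if limsup_{n→∞} n·h(rₙ^{(a)}/n) = ∞; and 0 < P^h(C_a) < ∞ if and only if 0 < limsup_{n→∞} n·h(rₙ^{(a)}/n) < ∞. -/

import Mathlib

open Set Filter Metric MeasureTheory
open scoped ENNReal NNReal Topology

noncomputable section

/-- The `h`-Hausdorff measure of `E ⊆ ℝ`: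
`H^h(E) = lim_{δ→0⁺} inf {Σᵢ h(|Eᵢ|) : E ⊆ ⋃ᵢ Eᵢ, |Eᵢ| ≤ δ}`.
Since the inner infimum is antitone in `δ`, the limit as `δ → 0⁺` is the
supremum over `0 < δ ≤ A` (the parameter `A` records the domain `(0,A]` of the
dimension function `h`; by monotonicity the value of the limit is unchanged). -/
def Hh (A : ℝ) (h : ℝ → ℝ≥0∞) (E : Set ℝ) : ℝ≥0∞ :=
  ⨆ (δ : ℝ) (_ : 0 < δ) (_ : δ ≤ A),
    ⨅ (t : ℕ → Set ℝ) (_ : E ⊆ ⋃ n, t n) (_ : ∀ n, Metric.diam (t n) ≤ δ),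
      ∑' n, h (Metric.diam (t n))

/-- A `δ`-packing of `E`: a countable disjoint family of open balls centered at
points of `E` with diameters less than `δ`, recorded as a set of
(center, radius) pairs. -/
def IsPacking (E : Set ℝ) (δ : ℝ) (P : Set (ℝ × ℝ)) : Prop :=
  P.Countable ∧ (∀ p ∈ P, p.1 ∈ E ∧ 0 < p.2 ∧ 2 * p.2 < δ) ∧
    P.PairwiseDisjoint fun p => Metric.ball p.1 p.2

/-- The `h`-packing pre-measure of `E ⊆ ℝ`:
`P₀^h(E) = lim_{δ→0⁺} sup {Σᵢ h(|Bᵢ|) : {Bᵢ} is a δ-packing of E}`.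
The inner supremum is monotone in `δ`, so the limit as `δ → 0⁺` is the infimum
over `0 < δ ≤ A`. -/
def P0h (A : ℝ) (h : ℝ → ℝ≥0∞) (E : Set ℝ) : ℝ≥0∞ :=
  ⨅ (δ : ℝ) (_ : 0 < δ) (_ : δ ≤ A),
    ⨆ (P : Set (ℝ × ℝ)) (_ : IsPacking E δ P), ∑' p : P, h (2 * (p : ℝ × ℝ).2)

/-- The `h`-packing measure: `P^h(E) = inf {Σᵢ P₀^h(Eᵢ) : E = ⋃ᵢ Eᵢ}`. -/
def Ph (A : ℝ) (h : ℝ → ℝ≥0∞) (E : Set ℝ) : ℝ≥0∞ :=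
  ⨅ (t : ℕ → Set ℝ) (_ : E = ⋃ n, t n), ∑' n, P0h A h (t n)

/-- `h` is a dimension function with domain `(0, A]`: continuous, increasing,
doubling, positive, with `h(x) → 0` as `x → 0⁺`.  We record partial functions
`(0,A] → (0,∞]` as functions `ℝ → ℝ≥0∞` extended by `0` on nonpositive
arguments (the continuous extension at `0`). -/
structure IsDimFun (A : ℝ) (h : ℝ → ℝ≥0∞) : Prop where
  posA : 0 < A
  zero_of_nonpos : ∀ x : ℝ, x ≤ 0 → h x = 0
  pos : ∀ x ∈ Set.Ioc (0 : ℝ) A, 0 < h x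
  continuousOn : ContinuousOn h (Set.Ioc 0 A)
  strictMonoOn : StrictMonoOn h (Set.Ioc 0 A)
  doubling : ∃ τ : ℝ≥0∞, 0 < τ ∧ τ ≠ ∞ ∧ ∀ x : ℝ, 0 < x → 2 * x ≤ A → τ * h (2 * x) ≤ h x
  tendsto_zero : Tendsto h (nhdsWithin 0 (Set.Ioi 0)) (nhds 0)

/-- `f ≼ h` on `(0, A]`: there is a (finite, positive) constant `c` with
`f(x) ≤ c·h(x)` for all `x ∈ (0,A]`. -/
def FLeq (A : ℝ) (f h : ℝ → ℝ≥0∞) : Prop :=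
  ∃ c : ℝ≥0∞, 0 < c ∧ c ≠ ∞ ∧ ∀ x ∈ Set.Ioc (0 : ℝ) A, f x ≤ c * h x

/-- `f ≡ h` on `(0, A]`: `f ≼ h` and `h ≼ f`. -/
def FEquiv (A : ℝ) (f h : ℝ → ℝ≥0∞) : Prop := FLeq A f h ∧ FLeq A h f

/-- Tail of a series: `rTail a n = Σ_{j ≥ n} a j` (0-based indexing, so the
paper's `r_n`, `n ≥ 1`, is `rTail a (n-1)`). -/
def rTail (a : ℕ → ℝ) (n : ℕ) : ℝ := ∑' k : ℕ, a (n + k)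

/-- In the Cantor construction for the gap sequence `a`, the gaps are indexed
by the nodes `m ≥ 1` of the infinite binary tree in heap order (node `m` has
children `2m, 2m+1`), the gap at node `m` having length `a (m-1)`.  `nodeLen a m`
is the sum of the lengths of all gaps in the subtree rooted at `m`, i.e. the
length of the step interval corresponding to node `m`. -/
def nodeLen (a : ℕ → ℝ) (m : ℕ) : ℝ :=
  ∑' k : ℕ, ∑ i ∈ Finset.range (2 ^ k), a (m * 2 ^ k + i - 1)

/-- Left endpoint of the `j`-th (0 ≤ j < 2^k, left to right) step-`k` interval
in the Cantor construction for the gap sequence `a` (realized in `[0, Σ a]`):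
a left child keeps its parent's left endpoint; a right child's interval starts
after its left sibling's interval followed by the parent's gap. -/
def leftEnd (a : ℕ → ℝ) : ℕ → ℕ → ℝ
  | 0, _ => 0
  | (k + 1), j =>
    if j % 2 = 0 then leftEnd a k (j / 2)
    else leftEnd a k (j / 2) + nodeLen a (2 ^ (k + 1) + j - 1) + a (2 ^ k + j / 2 - 1)

/-- The Cantor set `C_a` associated with a (positive, non-increasing, summable)
sequence `a`, realized inside the interval `[0, Σ a]`: the intersection over
`k` of the unions of the `2^k` step-`k` intervals. -/
def cantorSetOf (a : ℕ → ℝ) : Set ℝ :=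
  ⋂ k : ℕ, ⋃ j ∈ Finset.range (2 ^ k),
    Set.Icc (leftEnd a k j) (leftEnd a k j + nodeLen a (2 ^ k + j))

/-- `h` (increasing and continuous on `(0, A]`) is associated to the sequence
`a`: the sequence `{h(r_n/n)}` is equivalent to `{1/n}`, i.e. there are
constants `0 < c₁, c₂ < ∞` with `c₁ ≤ n · h(r_n/n) ≤ c₂` for all `n ≥ 1`
(0-based: `n ≥ 1` corresponds to `n+1` below). -/
def IsAssociated (A : ℝ) (h : ℝ → ℝ≥0∞) (a : ℕ → ℝ) : Prop :=
  ContinuousOn h (Set.Ioc 0 A) ∧ StrictMonoOn h (Set.Ioc 0 A) ∧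
  ∃ c₁ c₂ : ℝ≥0∞, 0 < c₁ ∧ c₂ ≠ ∞ ∧ ∀ n : ℕ,
    c₁ ≤ ((n : ℝ≥0∞) + 1) * h (rTail a n / ((n : ℝ) + 1)) ∧
    ((n : ℝ≥0∞) + 1) * h (rTail a n / ((n : ℝ) + 1)) ≤ c₂

/-- Weak tail-equivalence: there are positive integers `j, k` with
`r_n^{(a)} ≥ r_{jn}^{(b)}/j` and `r_n^{(b)} ≥ r_{kn}^{(a)}/k` for all `n ≥ 1`
(0-based shift: paper's `r_n` is `rTail · (n-1)`). -/
def WeakTailEquiv (a b : ℕ → ℝ) : Prop :=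
  ∃ j k : ℕ, 0 < j ∧ 0 < k ∧
    (∀ n : ℕ, rTail b (j * (n + 1) - 1) / (j : ℝ) ≤ rTail a n) ∧
    (∀ n : ℕ, rTail a (k * (n + 1) - 1) / (k : ℝ) ≤ rTail b n)

/-- Tail-equivalence: the sequences of tails are equivalent, i.e. the ratios
`r_n^{(a)}/r_n^{(b)}` are bounded above and below by positive constants. -/
def TailEquiv (a b : ℕ → ℝ) : Prop :=
  ∃ c₁ c₂ : ℝ, 0 < c₁ ∧ ∀ n : ℕ,
    c₁ ≤ rTail a n / rTail b n ∧ rTail a n / rTail b n ≤ c₂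

/-- The Hausdorff dimension of `E`, computed from the `h_s`-Hausdorff measures,
`h_s(x) = x^s`:  `dim_H E = sup {s > 0 : H^{h_s}(E) = ∞}`. -/
def hausdDim (A : ℝ) (E : Set ℝ) : ℝ≥0∞ :=
  ⨆ (s : ℝ) (_ : 0 < s) (_ : Hh A (fun x => ENNReal.ofReal (x ^ s)) E = ∞),
    ENNReal.ofReal s

/-- The packing dimension of `E`: `dim_P E = sup {s > 0 : P^{h_s}(E) = ∞}`. -/
def packDim (A : ℝ) (E : Set ℝ) : ℝ≥0∞ :=
  ⨆ (s : ℝ) (_ : 0 < s) (_ : Ph A (fun x => ENNReal.ofReal (x ^ s)) E = ∞),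
    ENNReal.ofReal s

/-- The pre-packing dimension of `E`: `dim_{P₀} E = sup {s > 0 : P₀^{h_s}(E) = ∞}`. -/
def prePackDim (A : ℝ) (E : Set ℝ) : ℝ≥0∞ :=
  ⨆ (s : ℝ) (_ : 0 < s) (_ : P0h A (fun x => ENNReal.ofReal (x ^ s)) E = ∞),
    ENNReal.ofReal s

/-- `f ≼ h` on the set `S`, for real-valued functions. -/
def RLeqOn (S : Set ℝ) (f h : ℝ → ℝ) : Prop :=
  ∃ c : ℝ, 0 < c ∧ ∀ x ∈ S, f x ≤ c * h x

/-- `f ≡ h` on the set `S`, for real-valued functions. -/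
def REquivOn (S : Set ℝ) (f h : ℝ → ℝ) : Prop := RLeqOn S f h ∧ RLeqOn S h f

/-- Real-valued version of `IsAssociated`: `h : (0,A] → (0,∞)` is increasing,
continuous, positive and `{h(r_n/n)} ≡ {1/n}`. -/
def IsAssociatedR (A : ℝ) (h : ℝ → ℝ) (a : ℕ → ℝ) : Prop :=
  ContinuousOn h (Set.Ioc 0 A) ∧ StrictMonoOn h (Set.Ioc 0 A) ∧
  (∀ x ∈ Set.Ioc (0 : ℝ) A, 0 < h x) ∧
  ∃ c₁ c₂ : ℝ, 0 < c₁ ∧ ∀ n : ℕ,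
    c₁ ≤ ((n : ℝ) + 1) * h (rTail a n / ((n : ℝ) + 1)) ∧
    ((n : ℝ) + 1) * h (rTail a n / ((n : ℝ) + 1)) ≤ c₂

end

noncomputable section

/-!
The Cantor measure `μ`, the image of Lebesgue measure on `[0, 1)` under the coding of `C_a` by
binary expansions, gives mass about `2⁻ᵏ` to a step-`k` interval. These intervals do not all have
the same length, but since `a` is non-increasing their lengths lie between the means `s_{k+1}` and
`s_{k-1}`, where `s_k = r_{2ᵏ} / 2ᵏ`. Hence balls centred in `C_a` of radius about `s_k` have
`μ`-mass about `2⁻ᵏ`, and since `h` is doubling, comparing `h (s_k)` with `2⁻ᵏ` compares `h` of the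
diameter of a ball with its mass. If `h (2ρ) ≤ C μ(B(x, ρ))` for all small `ρ`, every fine packing
has `h`-sum at most `C`; if `C μ(B(x, 2ρ)) ≤ h (2ρ)` along some radii `ρ → 0`, the disjoint balls of
a maximal family of such a radius witness `C μ(E) ≤ P₀^h(E)` for every `E ⊆ C_a`, and the countable
subadditivity of `μ` passes this bound on to `P^h`. So `P^h(C_a)` is comparable to
`limsup 2ᵏ h (s_k)`, which is comparable to `limsup n h (rₙ / n)`.
-/

/-! ### Mass distribution principles for packing measures -/

section PackingMeasure

variable {A : ℝ} {h : ℝ → ℝ≥0∞} {E : Set ℝ} {μ : Measure ℝ} {C : ℝ≥0∞}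

theorem P0h_empty (hA : 0 < A) : P0h A h ∅ = 0 := by
  refine le_antisymm (iInf₂_le_of_le A hA <| iInf_le_of_le le_rfl <| iSup₂_le fun P hP => ?_)
    zero_le
  obtain rfl : P = ∅ := eq_empty_of_forall_notMem fun p hp => (hP.2.1 p hp).1
  simp

theorem Ph_le_P0h (hA : 0 < A) (E : Set ℝ) : Ph A h E ≤ P0h A h E := by
  refine iInf₂_le_of_le (fun n => if n = 0 then E else ∅) (by ext x; simp) ?_
  rw [tsum_eq_single 0 fun n hn => by simp [hn, P0h_empty hA]]
  simp

theorem isPacking_image_prodMk {s : Set ℝ} {δ ρ : ℝ} (hsE : s ⊆ E) (hρ : 0 < ρ)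
    (hρδ : 2 * ρ < δ) (hs : s.PairwiseDisjoint fun x => ball x ρ) :
    IsPacking E δ ((fun x => (x, ρ)) '' s) := by
  have hcount : s.Countable :=
    hs.countable_of_isOpen (fun _ _ => isOpen_ball) fun _ _ => nonempty_ball.2 hρ
  refine ⟨hcount.image _, forall_mem_image.2 fun x hx => ⟨hsE hx, hρ, hρδ⟩, ?_⟩
  rintro _ ⟨x, hx, rfl⟩ _ ⟨y, hy, rfl⟩ hxy
  exact hs hx hy fun e => hxy (by rw [e])

theorem exists_pairwiseDisjoint_ball_subset_iUnion_ball (E : Set ℝ) {ρ : ℝ} (hρ : 0 < ρ) :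
    ∃ s ⊆ E, (s.PairwiseDisjoint fun x => ball x ρ) ∧ E ⊆ ⋃ x ∈ s, ball x (2 * ρ) := by
  obtain ⟨s, hsE, hdisj, hmeet⟩ := Vitali.exists_disjoint_subfamily_covering_enlargement
    (fun x : ℝ => ball x ρ) E (fun _ => 1) 2 one_lt_two (fun _ _ => zero_le_one) 1
    (fun _ _ => le_rfl) fun _ _ => nonempty_ball.2 hρ
  refine ⟨s, hsE, hdisj, fun x hx => ?_⟩
  obtain ⟨y, hy, ⟨z, hzx, hzy⟩, -⟩ := hmeet x hx
  refine mem_iUnion₂.2 ⟨y, hy, ?_⟩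
  calc dist x y ≤ dist z x + dist z y := dist_triangle_left x y z
    _ < 2 * ρ := by linarith [mem_ball.1 hzx, mem_ball.1 hzy]

theorem mul_measure_le_P0h
    (hμ : ∃ᶠ ρ in 𝓝[>] (0 : ℝ), ∀ x ∈ E, C * μ (ball x (2 * ρ)) ≤ h (2 * ρ)) :
    C * μ E ≤ P0h A h E := by
  refine le_iInf₂ fun δ hδ => le_iInf fun _ => ?_
  have hsmall : ∀ᶠ ρ in 𝓝[>] (0 : ℝ), 0 < ρ ∧ ρ < δ / 2 := Ioo_mem_nhdsGT (half_pos hδ)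
  obtain ⟨ρ, hρμ, hρ, hρδ⟩ := (hμ.and_eventually hsmall).exists
  obtain ⟨s, hsE, hdisj, hcover⟩ := exists_pairwiseDisjoint_ball_subset_iUnion_ball E hρ
  have hpack : IsPacking E δ ((fun x => (x, ρ)) '' s) :=
    isPacking_image_prodMk hsE hρ (by linarith) hdisj
  have hcount : s.Countable :=
    hdisj.countable_of_isOpen (fun _ _ => isOpen_ball) fun _ _ => nonempty_ball.2 hρ
  calc C * μ E ≤ C * ∑' x : s, μ (ball (x : ℝ) (2 * ρ)) := by
        gcongr
        exact (measure_mono hcover).trans (measure_biUnion_le μ hcount _)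
    _ = ∑' x : s, C * μ (ball (x : ℝ) (2 * ρ)) := ENNReal.tsum_mul_left.symm
    _ ≤ ∑' _ : s, h (2 * ρ) := ENNReal.tsum_le_tsum fun x => hρμ x (hsE x.2)
    _ = ∑' p : ((fun x => (x, ρ)) '' s : Set (ℝ × ℝ)), h (2 * (p : ℝ × ℝ).2) :=
        (tsum_image (fun p : ℝ × ℝ => h (2 * p.2)) (Prod.mk_left_injective ρ).injOn).symm
    _ ≤ _ := le_iSup₂ (f := fun (P : Set (ℝ × ℝ)) _ => ∑' p : P, h (2 * (p : ℝ × ℝ).2)) _ hpack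

theorem mul_measure_le_Ph
    (hμ : ∃ᶠ ρ in 𝓝[>] (0 : ℝ), ∀ x ∈ E, C * μ (ball x (2 * ρ)) ≤ h (2 * ρ)) :
    C * μ E ≤ Ph A h E := by
  refine le_iInf₂ fun t ht => ?_
  have hpiece (n : ℕ) : C * μ (t n) ≤ P0h A h (t n) :=
    mul_measure_le_P0h <| hμ.mono fun ρ hρ x hx => hρ x (ht ▸ mem_iUnion_of_mem n hx)
  calc C * μ E ≤ C * ∑' n, μ (t n) := by
        gcongr
        exact ht ▸ measure_iUnion_le t
    _ = ∑' n, C * μ (t n) := ENNReal.tsum_mul_left.symm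
    _ ≤ ∑' n, P0h A h (t n) := ENNReal.tsum_le_tsum hpiece

theorem P0h_le_mul_measure_univ (hA : 0 < A)
    (hμ : ∀ᶠ ρ in 𝓝[>] (0 : ℝ), ∀ x ∈ E, h (2 * ρ) ≤ C * μ (ball x ρ)) :
    P0h A h E ≤ C * μ univ := by
  obtain ⟨δ, hδ : 0 < δ, hδμ⟩ := mem_nhdsGT_iff_exists_Ioo_subset.1 hμ
  refine iInf₂_le_of_le (min A δ) (lt_min hA hδ) <| iInf_le_of_le (min_le_left _ _) <|
    iSup₂_le fun P ⟨hPc, hP, hPd⟩ => ?_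
  have : Countable P := hPc.to_subtype
  have hball (p : P) : h (2 * (p : ℝ × ℝ).2) ≤ C * μ (ball (p : ℝ × ℝ).1 (p : ℝ × ℝ).2) := by
    obtain ⟨hpE, hp0, hpδ⟩ := hP _ p.2
    exact hδμ ⟨hp0, by linarith [min_le_right A δ]⟩ _ hpE
  calc ∑' p : P, h (2 * (p : ℝ × ℝ).2)
      ≤ ∑' p : P, C * μ (ball (p : ℝ × ℝ).1 (p : ℝ × ℝ).2) := ENNReal.tsum_le_tsum hball
    _ = C * ∑' p : P, μ (ball (p : ℝ × ℝ).1 (p : ℝ × ℝ).2) := ENNReal.tsum_mul_left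
    _ ≤ C * μ univ := by
        gcongr
        exact (tsum_meas_le_meas_iUnion_of_disjoint μ (fun _ => measurableSet_ball)
          (pairwise_subtype_iff_pairwise_set P _ |>.2 hPd)).trans (measure_mono (subset_univ _))

end PackingMeasure

/-! ### Tails of the gap sequence -/

section Tails

variable {a : ℕ → ℝ}

theorem nonneg_of_antitone_of_summable (ha : Antitone a) (hs : Summable a) (n : ℕ) : 0 ≤ a n :=
  ha.le_of_tendsto hs.tendsto_atTop_zero n

theorem rTail_zero (a : ℕ → ℝ) : rTail a 0 = ∑' i, a i := by
  simp only [rTail, zero_add]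

theorem rTail_eq_sum_add_rTail (hs : Summable a) (n m : ℕ) :
    rTail a n = ∑ i ∈ Finset.range m, a (n + i) + rTail a (n + m) := by
  have hshift : Summable fun k => a (n + k) := hs.comp_injective (add_right_injective n)
  rw [rTail, ← hshift.sum_add_tsum_nat_add m, rTail]
  congr 1
  exact tsum_congr fun k => congrArg a (by ring)

theorem rTail_antitone (h0 : ∀ n, 0 ≤ a n) (hs : Summable a) : Antitone (rTail a) := by
  refine antitone_nat_of_succ_le fun n => ?_
  rw [rTail_eq_sum_add_rTail hs n 1, Finset.sum_range_one]
  linarith [h0 (n + 0)]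

theorem rTail_pos (hpos : ∀ n, 0 < a n) (hs : Summable a) (n : ℕ) : 0 < rTail a n := by
  rw [rTail_eq_sum_add_rTail hs n 1, Finset.sum_range_one]
  exact add_pos_of_pos_of_nonneg (hpos _) (tsum_nonneg fun _ => (hpos _).le)

/-- The mean length of the `2 ^ k` step-`k` intervals of the Cantor construction: these lengths
add up to the tail of `a` left once the `2 ^ k - 1` gaps of the earlier steps are removed. -/
def avgLen (a : ℕ → ℝ) (k : ℕ) : ℝ := rTail a (2 ^ k - 1) / 2 ^ k

theorem avgLen_pos (hpos : ∀ n, 0 < a n) (hs : Summable a) (k : ℕ) : 0 < avgLen a k :=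
  div_pos (rTail_pos hpos hs _) (by positivity)

theorem tendsto_avgLen (h0 : ∀ n, 0 ≤ a n) (hs : Summable a) :
    Tendsto (avgLen a) atTop (𝓝 0) := by
  have hgeom : Tendsto (fun k : ℕ => rTail a 0 * (1 / 2 : ℝ) ^ k) atTop (𝓝 0) := by
    simpa only [mul_zero] using (tendsto_pow_atTop_nhds_zero_of_lt_one (r := (1 / 2 : ℝ))
      (by norm_num) (by norm_num)).const_mul (rTail a 0)
  refine squeeze_zero (fun k => div_nonneg (tsum_nonneg fun _ => h0 _) (by positivity))
    (fun k => ?_) hgeom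
  rw [avgLen, one_div, inv_pow, ← div_eq_mul_inv]
  gcongr
  exact rTail_antitone h0 hs (Nat.zero_le _)

end Tails

/-! ### Lengths of the step intervals -/

section NodeLengths

variable {a : ℕ → ℝ}

/-- The sum of the gaps attached to the nodes `k` levels below the node `m` of the binary tree,
so that `nodeLen a m` is the sum of `descendantSum a m k` over `k`. -/
def descendantSum (a : ℕ → ℝ) (m k : ℕ) : ℝ := ∑ i ∈ Finset.range (2 ^ k), a (m * 2 ^ k + i - 1)

theorem nodeLen_eq_tsum_descendantSum (a : ℕ → ℝ) (m : ℕ) :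
    nodeLen a m = ∑' k, descendantSum a m k := rfl

theorem descendantSum_nonneg (h0 : ∀ n, 0 ≤ a n) (m k : ℕ) : 0 ≤ descendantSum a m k :=
  Finset.sum_nonneg fun _ _ => h0 _

theorem descendantSum_antitone (ha : Antitone a) (k : ℕ) :
    Antitone fun m => descendantSum a m k := fun m m' hm =>
  Finset.sum_le_sum fun i _ => ha <| by gcongr

theorem descendantSum_zero_right (a : ℕ → ℝ) (m : ℕ) : descendantSum a m 0 = a (m - 1) := by
  simp [descendantSum]

theorem descendantSum_succ (a : ℕ → ℝ) (m k : ℕ) :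
    descendantSum a m (k + 1) = descendantSum a (2 * m) k + descendantSum a (2 * m + 1) k := by
  simp only [descendantSum]
  rw [pow_succ, mul_two, Finset.sum_range_add]
  congr 1 <;> refine Finset.sum_congr rfl fun i _ => congrArg a ?_ <;> congr 1 <;> ring

theorem sum_range_descendantSum_one (a : ℕ → ℝ) (n : ℕ) :
    ∑ k ∈ Finset.range n, descendantSum a 1 k = ∑ i ∈ Finset.range (2 ^ n - 1), a i := by
  induction n with
  | zero => simp
  | succ n ih =>
    have hpow : 1 ≤ 2 ^ n := Nat.one_le_two_pow
    rw [Finset.sum_range_succ, ih, show 2 ^ (n + 1) - 1 = (2 ^ n - 1) + 2 ^ n by omega,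
      Finset.sum_range_add, descendantSum]
    exact congrArg _ (Finset.sum_congr rfl fun i _ => congrArg a (by omega))

theorem tendsto_two_pow_sub_one_atTop : Tendsto (fun n : ℕ => 2 ^ n - 1) atTop atTop :=
  tendsto_atTop_mono (fun _ => Nat.le_sub_one_of_lt Nat.lt_two_pow_self) tendsto_id

theorem hasSum_descendantSum_one (h0 : ∀ n, 0 ≤ a n) (hs : Summable a) :
    HasSum (descendantSum a 1) (∑' i, a i) := by
  rw [hasSum_iff_tendsto_nat_of_nonneg (descendantSum_nonneg h0 1)]
  exact (hs.hasSum.tendsto_sum_nat.comp tendsto_two_pow_sub_one_atTop).congr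
    fun n => (sum_range_descendantSum_one a n).symm

theorem summable_descendantSum (ha : Antitone a) (hs : Summable a) {m : ℕ} (hm : 1 ≤ m) :
    Summable (descendantSum a m) :=
  have h0 := nonneg_of_antitone_of_summable ha hs
  (hasSum_descendantSum_one h0 hs).summable.of_nonneg_of_le (descendantSum_nonneg h0 m)
    fun k => descendantSum_antitone ha k hm

theorem nodeLen_one (h0 : ∀ n, 0 ≤ a n) (hs : Summable a) : nodeLen a 1 = ∑' i, a i :=
  (hasSum_descendantSum_one h0 hs).tsum_eq

theorem nodeLen_nonneg (h0 : ∀ n, 0 ≤ a n) (m : ℕ) : 0 ≤ nodeLen a m :=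
  tsum_nonneg (descendantSum_nonneg h0 m)

theorem nodeLen_antitoneOn (ha : Antitone a) (hs : Summable a) :
    AntitoneOn (nodeLen a) (Ici 1) := fun _ hm _ hm' hmm' =>
  (summable_descendantSum ha hs hm').tsum_le_tsum (fun k => descendantSum_antitone ha k hmm')
    (summable_descendantSum ha hs hm)

theorem nodeLen_eq_add_children (ha : Antitone a) (hs : Summable a) {m : ℕ} (hm : 1 ≤ m) :
    nodeLen a m = a (m - 1) + nodeLen a (2 * m) + nodeLen a (2 * m + 1) := by
  simp only [nodeLen_eq_tsum_descendantSum]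
  rw [(summable_descendantSum ha hs hm).tsum_eq_zero_add, descendantSum_zero_right, add_assoc,
    ← (summable_descendantSum ha hs (by omega)).tsum_add (summable_descendantSum ha hs (by omega))]
  simp only [descendantSum_succ]

theorem sum_range_two_mul {M : Type*} [AddCommMonoid M] (f : ℕ → M) (n : ℕ) :
    ∑ j ∈ Finset.range (2 * n), f j = ∑ j ∈ Finset.range n, (f (2 * j) + f (2 * j + 1)) := by
  induction n with
  | zero => simp
  | succ n ih =>
    rw [mul_add_one, Finset.sum_range_succ, Finset.sum_range_succ, ih, Finset.sum_range_succ,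
      add_assoc]

theorem sum_nodeLen_level (ha : Antitone a) (hs : Summable a) (k : ℕ) :
    ∑ j ∈ Finset.range (2 ^ k), nodeLen a (2 ^ k + j) = rTail a (2 ^ k - 1) := by
  induction k with
  | zero =>
    simpa [rTail_zero] using nodeLen_one (nonneg_of_antitone_of_summable ha hs) hs
  | succ k ih =>
    have hpow : 1 ≤ 2 ^ k := Nat.one_le_two_pow
    have hnode (j : ℕ) : nodeLen a (2 ^ k + j) = a (2 ^ k - 1 + j) +
        (nodeLen a (2 ^ (k + 1) + 2 * j) + nodeLen a (2 ^ (k + 1) + (2 * j + 1))) := by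
      rw [nodeLen_eq_add_children ha hs (by omega), show 2 ^ k + j - 1 = 2 ^ k - 1 + j by omega,
        show 2 * (2 ^ k + j) = 2 ^ (k + 1) + 2 * j by ring, add_assoc, add_assoc]
    have hlevel : ∑ j ∈ Finset.range (2 ^ k), nodeLen a (2 ^ k + j) =
        ∑ j ∈ Finset.range (2 ^ k), a (2 ^ k - 1 + j) +
          ∑ j ∈ Finset.range (2 ^ (k + 1)), nodeLen a (2 ^ (k + 1) + j) := by
      simp only [hnode, Finset.sum_add_distrib, pow_succ' 2 k, sum_range_two_mul]
    have htail := rTail_eq_sum_add_rTail hs (2 ^ k - 1) (2 ^ k)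
    rw [show 2 ^ k - 1 + 2 ^ k = 2 ^ (k + 1) - 1 by omega] at htail
    linarith

theorem avgLen_le_nodeLen (ha : Antitone a) (hs : Summable a) {k m : ℕ} (hm : 1 ≤ m)
    (hmk : m ≤ 2 ^ k) : avgLen a k ≤ nodeLen a m := by
  rw [avgLen, div_le_iff₀ (by positivity), ← sum_nodeLen_level ha hs, mul_comm]
  simpa using Finset.sum_le_card_nsmul (Finset.range (2 ^ k)) _ (nodeLen a m) fun j _ =>
    nodeLen_antitoneOn ha hs hm (mem_Ici.2 (by omega)) (show m ≤ 2 ^ k + j by omega)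

theorem nodeLen_le_avgLen (ha : Antitone a) (hs : Summable a) {k m : ℕ} (hkm : 2 ^ (k + 1) ≤ m) :
    nodeLen a m ≤ avgLen a k := by
  have hpow : 1 ≤ 2 ^ k := Nat.one_le_two_pow
  rw [avgLen, le_div_iff₀ (by positivity), ← sum_nodeLen_level ha hs, mul_comm]
  simpa using Finset.card_nsmul_le_sum (Finset.range (2 ^ k)) _ (nodeLen a m) fun j hj =>
    have hj : j < 2 ^ k := Finset.mem_range.1 hj
    nodeLen_antitoneOn ha hs (mem_Ici.2 (by omega)) (mem_Ici.2 (by omega))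
      (show 2 ^ k + j ≤ m by omega)

end NodeLengths

/-! ### Step intervals -/

section StepIntervals

variable {a : ℕ → ℝ}

/-- Right endpoint of the `j`-th step-`k` interval, `0 ≤ j < 2 ^ k`. -/
def rightEnd (a : ℕ → ℝ) (k j : ℕ) : ℝ := leftEnd a k j + nodeLen a (2 ^ k + j)

/-- The `j`-th step-`k` interval of the Cantor construction, `0 ≤ j < 2 ^ k`. -/
def stepInterval (a : ℕ → ℝ) (k j : ℕ) : Set ℝ := Icc (leftEnd a k j) (rightEnd a k j)

theorem mem_cantorSetOf {x : ℝ} :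
    x ∈ cantorSetOf a ↔ ∀ k, ∃ j < 2 ^ k, x ∈ stepInterval a k j := by
  simp only [cantorSetOf, stepInterval, rightEnd, mem_iInter, mem_iUnion, Finset.mem_range,
    exists_prop]

theorem leftEnd_two_mul (a : ℕ → ℝ) (k j : ℕ) : leftEnd a (k + 1) (2 * j) = leftEnd a k j := by
  simp [leftEnd]

theorem leftEnd_two_mul_add_one (a : ℕ → ℝ) (k j : ℕ) : leftEnd a (k + 1) (2 * j + 1) =
    leftEnd a k j + nodeLen a (2 * (2 ^ k + j)) + a (2 ^ k + j - 1) := by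
  have hnode : 2 ^ (k + 1) + (2 * j + 1) - 1 = 2 * (2 ^ k + j) := by omega
  simp [leftEnd, hnode, show (2 * j + 1) / 2 = j by omega]

theorem rightEnd_two_mul (a : ℕ → ℝ) (k j : ℕ) :
    rightEnd a (k + 1) (2 * j) = leftEnd a k j + nodeLen a (2 * (2 ^ k + j)) := by
  rw [rightEnd, leftEnd_two_mul, show 2 ^ (k + 1) + 2 * j = 2 * (2 ^ k + j) by ring]

theorem rightEnd_two_mul_add_one (ha : Antitone a) (hs : Summable a) (k j : ℕ) :
    rightEnd a (k + 1) (2 * j + 1) = rightEnd a k j := by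
  have hpow : 1 ≤ 2 ^ k := Nat.one_le_two_pow
  rw [rightEnd, rightEnd, leftEnd_two_mul_add_one,
    nodeLen_eq_add_children ha hs (m := 2 ^ k + j) (by omega),
    show 2 ^ (k + 1) + (2 * j + 1) = 2 * (2 ^ k + j) + 1 by ring]
  ring

theorem leftEnd_le_rightEnd (h0 : ∀ n, 0 ≤ a n) (k j : ℕ) : leftEnd a k j ≤ rightEnd a k j :=
  le_add_of_nonneg_right (nodeLen_nonneg h0 _)

theorem leftEnd_div_two_le (h0 : ∀ n, 0 ≤ a n) (k j : ℕ) :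
    leftEnd a k (j / 2) ≤ leftEnd a (k + 1) j := by
  obtain ⟨i, rfl | rfl⟩ := j.even_or_odd'
  · rw [show 2 * i / 2 = i by omega, leftEnd_two_mul]
  · rw [show (2 * i + 1) / 2 = i by omega, leftEnd_two_mul_add_one]
    linarith [h0 (2 ^ k + i - 1), nodeLen_nonneg h0 (2 * (2 ^ k + i))]

theorem rightEnd_le_rightEnd_div_two (ha : Antitone a) (hs : Summable a) (k j : ℕ) :
    rightEnd a (k + 1) j ≤ rightEnd a k (j / 2) := by
  obtain ⟨i, rfl | rfl⟩ := j.even_or_odd'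
  · have h0 := nonneg_of_antitone_of_summable ha hs
    have hpow : 1 ≤ 2 ^ k := Nat.one_le_two_pow
    rw [show 2 * i / 2 = i by omega, rightEnd_two_mul, rightEnd,
      nodeLen_eq_add_children ha hs (m := 2 ^ k + i) (by omega)]
    linarith [h0 (2 ^ k + i - 1), nodeLen_nonneg h0 (2 * (2 ^ k + i) + 1)]
  · rw [show (2 * i + 1) / 2 = i by omega, rightEnd_two_mul_add_one ha hs]

theorem rightEnd_le_leftEnd_succ (ha : Antitone a) (hs : Summable a) {k j : ℕ}
    (hj : j + 1 < 2 ^ k) : rightEnd a k j ≤ leftEnd a k (j + 1) := by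
  induction k generalizing j with
  | zero => simp at hj
  | succ k ih =>
    obtain ⟨i, rfl | rfl⟩ := j.even_or_odd'
    · rw [rightEnd_two_mul, leftEnd_two_mul_add_one]
      linarith [nonneg_of_antitone_of_summable ha hs (2 ^ k + i - 1)]
    · rw [rightEnd_two_mul_add_one ha hs, show 2 * i + 1 + 1 = 2 * (i + 1) by ring,
        leftEnd_two_mul]
      exact ih (by omega)

theorem rightEnd_le_leftEnd_of_lt (ha : Antitone a) (hs : Summable a) {k i j : ℕ} (hij : i < j)
    (hj : j < 2 ^ k) : rightEnd a k i ≤ leftEnd a k j := by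
  induction j, hij using Nat.le_induction with
  | base => exact rightEnd_le_leftEnd_succ ha hs hj
  | succ j _ ih =>
    calc rightEnd a k i ≤ leftEnd a k j := ih (by omega)
      _ ≤ rightEnd a k j := leftEnd_le_rightEnd (nonneg_of_antitone_of_summable ha hs) k j
      _ ≤ leftEnd a k (j + 1) := rightEnd_le_leftEnd_succ ha hs hj

theorem stepInterval_subset_ball {k j : ℕ} {x ρ : ℝ} (hx : x ∈ stepInterval a k j)
    (hρ : nodeLen a (2 ^ k + j) < ρ) : stepInterval a k j ⊆ ball x ρ := fun y hy => by
  calc dist y x ≤ rightEnd a k j - leftEnd a k j := Real.dist_le_of_mem_Icc hy hx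
    _ = nodeLen a (2 ^ k + j) := add_sub_cancel_left _ _
    _ < ρ := hρ

theorem avgLen_le_sub_of_add_one_lt (ha : Antitone a) (hs : Summable a) {k i j : ℕ} {x y : ℝ}
    (hx : x ∈ stepInterval a k i) (hy : y ∈ stepInterval a k j) (hij : i + 1 < j)
    (hj : j < 2 ^ k) : avgLen a (k + 1) ≤ y - x := by
  have hmid : avgLen a (k + 1) ≤ nodeLen a (2 ^ k + (i + 1)) :=
    avgLen_le_nodeLen ha hs (by omega) (by omega)
  have hlen : nodeLen a (2 ^ k + (i + 1)) = rightEnd a k (i + 1) - leftEnd a k (i + 1) :=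
    (add_sub_cancel_left _ _).symm
  linarith [hx.2, hy.1, rightEnd_le_leftEnd_of_lt ha hs (lt_add_one i) (hij.trans hj),
    rightEnd_le_leftEnd_of_lt ha hs hij hj]

end StepIntervals

/-! ### The Cantor measure -/

section CantorMeasure

variable {a : ℕ → ℝ}

/-- The index `j` of the dyadic interval `[j / 2 ^ k, (j + 1) / 2 ^ k)` containing `t ≥ 0`
(and `0` for negative `t`). -/
def dyadicIndex (k : ℕ) (t : ℝ) : ℕ := ⌊2 ^ k * t⌋₊

theorem dyadicIndex_succ_div_two (k : ℕ) (t : ℝ) :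
    dyadicIndex (k + 1) t / 2 = dyadicIndex k t := by
  rw [dyadicIndex, ← Nat.floor_div_ofNat, dyadicIndex]
  congr 1
  rw [pow_succ]
  ring

theorem dyadicIndex_lt {t : ℝ} (ht : t < 1) (k : ℕ) : dyadicIndex k t < 2 ^ k := by
  rw [dyadicIndex, Nat.floor_lt' (by positivity)]
  push_cast
  exact mul_lt_of_lt_one_right (by positivity) ht

theorem dyadicIndex_eq_of_mem_Ico {t : ℝ} {k j : ℕ}
    (ht : t ∈ Ico ((j : ℝ) / 2 ^ k) ((j + 1) / 2 ^ k)) : dyadicIndex k t = j := by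
  have hpow : (0 : ℝ) < 2 ^ k := by positivity
  have hlo : (j : ℝ) ≤ 2 ^ k * t := (div_le_iff₀' hpow).1 ht.1
  exact (Nat.floor_eq_iff (j.cast_nonneg.trans hlo)).2 ⟨hlo, (lt_div_iff₀' hpow).1 ht.2⟩

theorem sub_le_of_dyadicIndex_le_add_one {t u : ℝ} {k : ℕ} (ht : 0 ≤ t)
    (htu : dyadicIndex k u ≤ dyadicIndex k t + 1) : u - t ≤ 2 / 2 ^ k := by
  have hu : 2 ^ k * u < dyadicIndex k u + 1 := Nat.lt_floor_add_one _
  have ht' : (dyadicIndex k t : ℝ) ≤ 2 ^ k * t := Nat.floor_le (by positivity)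
  have hcast : (dyadicIndex k u : ℝ) ≤ dyadicIndex k t + 1 := by exact_mod_cast htu
  rw [le_div_iff₀ (by positivity)]
  linarith

/-- The coding map of the Cantor set: the binary digits of `t` prescribe the descent through the
step intervals. -/
def cantorCode (a : ℕ → ℝ) (t : ℝ) : ℝ := ⨆ k, leftEnd a k (dyadicIndex k t)

theorem cantorCode_mem_stepInterval (ha : Antitone a) (hs : Summable a) (t : ℝ) (k : ℕ) :
    cantorCode a t ∈ stepInterval a k (dyadicIndex k t) := by
  have h0 := nonneg_of_antitone_of_summable ha hs
  have hleft : Monotone fun k => leftEnd a k (dyadicIndex k t) := monotone_nat_of_le_succ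
    fun k => dyadicIndex_succ_div_two k t ▸ leftEnd_div_two_le h0 k _
  have hright : Antitone fun k => rightEnd a k (dyadicIndex k t) := antitone_nat_of_succ_le
    fun k => dyadicIndex_succ_div_two k t ▸ rightEnd_le_rightEnd_div_two ha hs k _
  exact mem_iInter.1 (hleft.ciSup_mem_iInter_Icc_of_antitone hright
    fun k => leftEnd_le_rightEnd h0 k _) k

theorem measurable_cantorCode (a : ℕ → ℝ) : Measurable (cantorCode a) :=
  Measurable.iSup fun _ => measurable_from_nat.comp (measurable_const_mul _).nat_floor

theorem cantorCode_mem_cantorSetOf (ha : Antitone a) (hs : Summable a) {t : ℝ} (ht : t < 1) :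
    cantorCode a t ∈ cantorSetOf a :=
  mem_cantorSetOf.2 fun k =>
    ⟨dyadicIndex k t, dyadicIndex_lt ht k, cantorCode_mem_stepInterval ha hs t k⟩

/-- The Cantor measure of `C_a`: the image of Lebesgue measure on `[0, 1)` under the coding map. It
gives mass at least `2⁻ᵏ` to each step-`k` interval. -/
def cantorMeasure (a : ℕ → ℝ) : Measure ℝ := (volume.restrict (Ico 0 1)).map (cantorCode a)

theorem cantorMeasure_univ (a : ℕ → ℝ) : cantorMeasure a univ = 1 := by
  simp [cantorMeasure, Measure.map_apply (measurable_cantorCode a)]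

theorem one_le_cantorMeasure_cantorSetOf (ha : Antitone a) (hs : Summable a) :
    1 ≤ cantorMeasure a (cantorSetOf a) := by
  calc (1 : ℝ≥0∞) = volume (Ico (0 : ℝ) 1) := by simp
    _ ≤ volume (cantorCode a ⁻¹' cantorSetOf a ∩ Ico 0 1) :=
        measure_mono fun t ht => ⟨cantorCode_mem_cantorSetOf ha hs ht.2, ht⟩
    _ = volume.restrict (Ico 0 1) (cantorCode a ⁻¹' cantorSetOf a) :=
        (Measure.restrict_apply' measurableSet_Ico).symm
    _ ≤ cantorMeasure a (cantorSetOf a) :=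
        Measure.le_map_apply (measurable_cantorCode a).aemeasurable _

theorem ofReal_div_two_pow {c : ℝ} (hc : 0 ≤ c) (k : ℕ) :
    ENNReal.ofReal (c / 2 ^ k) = ENNReal.ofReal c * (2 ^ k)⁻¹ := by
  rw [div_eq_mul_inv, ENNReal.ofReal_mul hc, ENNReal.ofReal_inv_of_pos (by positivity),
    ENNReal.ofReal_pow zero_le_two, ENNReal.ofReal_ofNat]

theorem inv_two_pow_le_cantorMeasure_stepInterval (ha : Antitone a) (hs : Summable a) {k j : ℕ}
    (hj : j < 2 ^ k) : (2 ^ k)⁻¹ ≤ cantorMeasure a (stepInterval a k j) := by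
  have hvol : volume (Ico ((j : ℝ) / 2 ^ k) ((j + 1) / 2 ^ k)) = (2 ^ k)⁻¹ := by
    rw [Real.volume_Ico, ← sub_div, add_sub_cancel_left, ofReal_div_two_pow zero_le_one,
      ENNReal.ofReal_one, one_mul]
  have hunit : Ico ((j : ℝ) / 2 ^ k) ((j + 1) / 2 ^ k) ⊆ Ico 0 1 := by
    refine Ico_subset_Ico (by positivity) ((div_le_one (by positivity)).2 ?_)
    exact_mod_cast hj
  have hmeas : MeasurableSet (stepInterval a k j) := measurableSet_Icc
  rw [cantorMeasure, Measure.map_apply (measurable_cantorCode a) hmeas,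
    Measure.restrict_apply' measurableSet_Ico, ← hvol]
  refine measure_mono fun t ht => ⟨?_, hunit ht⟩
  exact dyadicIndex_eq_of_mem_Ico ht ▸ cantorCode_mem_stepInterval ha hs t k

theorem inv_two_pow_le_cantorMeasure_ball (ha : Antitone a) (hs : Summable a) {x ρ : ℝ} {k : ℕ}
    (hx : x ∈ cantorSetOf a) (hρ : avgLen a k < ρ) :
    (2 ^ (k + 1))⁻¹ ≤ cantorMeasure a (ball x ρ) := by
  obtain ⟨j, hj, hxj⟩ := mem_cantorSetOf.1 hx (k + 1)
  have hlen : nodeLen a (2 ^ (k + 1) + j) ≤ avgLen a k := nodeLen_le_avgLen ha hs (by omega)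
  exact (inv_two_pow_le_cantorMeasure_stepInterval ha hs hj).trans
    (measure_mono (stepInterval_subset_ball hxj (hlen.trans_lt hρ)))

theorem sub_le_of_cantorCode_sub_lt (ha : Antitone a) (hs : Summable a) {k : ℕ} {t u : ℝ}
    (ht : 0 ≤ t) (hu : u < 1) (htu : cantorCode a u - cantorCode a t < avgLen a (k + 1)) :
    u - t ≤ 2 / 2 ^ k := by
  refine sub_le_of_dyadicIndex_le_add_one ht ?_
  by_contra! hfar
  exact htu.not_ge <| avgLen_le_sub_of_add_one_lt ha hs (cantorCode_mem_stepInterval ha hs t k)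
    (cantorCode_mem_stepInterval ha hs u k) hfar (dyadicIndex_lt hu k)

theorem cantorMeasure_ball_le (ha : Antitone a) (hs : Summable a) {k : ℕ} (x : ℝ) {r : ℝ}
    (hr : 2 * r ≤ avgLen a (k + 1)) : cantorMeasure a (ball x r) ≤ 2 * (2 ^ k)⁻¹ := by
  have hclose : ∀ t ∈ cantorCode a ⁻¹' ball x r ∩ Ico 0 1,
      ∀ u ∈ cantorCode a ⁻¹' ball x r ∩ Ico 0 1, u - t ≤ 2 / 2 ^ k := by
    rintro t ⟨htx, ht⟩ u ⟨hux, hu⟩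
    refine sub_le_of_cantorCode_sub_lt ha hs ht.1 hu.2 ?_
    rw [mem_preimage, Real.ball_eq_Ioo] at htx hux
    linarith [htx.1, hux.2]
  rw [cantorMeasure, Measure.map_apply (measurable_cantorCode a) measurableSet_ball,
    Measure.restrict_apply' measurableSet_Ico]
  calc _ ≤ ENNReal.ofReal (2 / 2 ^ k) := (Real.volume_le_diam _).trans <| ediam_le
          fun t ht u hu => by
        rw [edist_dist, Real.dist_eq]
        exact ENNReal.ofReal_le_ofReal (abs_sub_le_iff.2 ⟨hclose u hu t ht, hclose t ht u hu⟩)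
    _ = 2 * (2 ^ k)⁻¹ := by rw [ofReal_div_two_pow zero_le_two, ENNReal.ofReal_ofNat]

end CantorMeasure

/-! ### Reduction to dyadic indices -/

section DyadicTails

variable {A : ℝ} {h : ℝ → ℝ≥0∞} {a : ℕ → ℝ}

/-- The paper's sequence `n · h (rₙ / n)`, with `n` shifted to start at `0`. -/
def tailSeq (h : ℝ → ℝ≥0∞) (a : ℕ → ℝ) (n : ℕ) : ℝ≥0∞ :=
  ((n : ℝ≥0∞) + 1) * h (rTail a n / ((n : ℝ) + 1))

/-- The subsequence of `tailSeq h a` along the powers of `2`, see `tailSeq_two_pow_sub_one`. -/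
def dyadicTailSeq (h : ℝ → ℝ≥0∞) (a : ℕ → ℝ) (k : ℕ) : ℝ≥0∞ := 2 ^ k * h (avgLen a k)

theorem tailSeq_two_pow_sub_one (h : ℝ → ℝ≥0∞) (a : ℕ → ℝ) (k : ℕ) :
    tailSeq h a (2 ^ k - 1) = dyadicTailSeq h a k := by
  have hsucc : 2 ^ k - 1 + 1 = 2 ^ k := Nat.sub_add_cancel Nat.one_le_two_pow
  have hreal : ((2 ^ k - 1 : ℕ) : ℝ) + 1 = 2 ^ k := by exact_mod_cast hsucc
  have hennreal : ((2 ^ k - 1 : ℕ) : ℝ≥0∞) + 1 = 2 ^ k := by exact_mod_cast hsucc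
  rw [tailSeq, dyadicTailSeq, avgLen, hreal, hennreal]

theorem limsup_dyadicTailSeq_le (h : ℝ → ℝ≥0∞) (a : ℕ → ℝ) :
    limsup (dyadicTailSeq h a) atTop ≤ limsup (tailSeq h a) atTop := by
  have hcomp : dyadicTailSeq h a = tailSeq h a ∘ fun k => 2 ^ k - 1 :=
    funext fun k => (tailSeq_two_pow_sub_one h a k).symm
  exact hcomp ▸ tendsto_two_pow_sub_one_atTop.limsup_comp_le_limsup

theorem tailSeq_le_two_mul_dyadicTailSeq (hpos : ∀ n, 0 < a n) (hs : Summable a)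
    (hh : MonotoneOn h (Ioc 0 A)) {n k : ℕ} (hkn : 2 ^ k ≤ n + 1) (hnk : n + 1 < 2 ^ (k + 1))
    (hA : avgLen a k ≤ A) : tailSeq h a n ≤ 2 * dyadicTailSeq h a k := by
  have hmean : rTail a n / ((n : ℝ) + 1) ≤ avgLen a k := by
    have htail : rTail a n ≤ rTail a (2 ^ k - 1) :=
      rTail_antitone (fun n => (hpos n).le) hs (by omega)
    have hden : (2 : ℝ) ^ k ≤ (n : ℝ) + 1 := by exact_mod_cast hkn
    exact div_le_div₀ (rTail_pos hpos hs _).le htail (by positivity) hden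
  have hcoef : (n : ℝ≥0∞) + 1 ≤ 2 * 2 ^ k := by
    rw [← pow_succ']
    exact_mod_cast hnk.le
  have hmean_pos : 0 < rTail a n / ((n : ℝ) + 1) := div_pos (rTail_pos hpos hs n) (by positivity)
  rw [tailSeq, dyadicTailSeq, ← mul_assoc]
  exact mul_le_mul' hcoef (hh ⟨hmean_pos, hmean.trans hA⟩ ⟨avgLen_pos hpos hs k, hA⟩ hmean)

theorem tendsto_log_two_succ_atTop : Tendsto (fun n => Nat.log 2 (n + 1)) atTop atTop :=
  tendsto_atTop.2 fun k => (eventually_ge_atTop (2 ^ k)).mono fun _ hn =>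
    Nat.le_log_of_pow_le one_lt_two (hn.trans (Nat.le_succ _))

theorem limsup_tailSeq_le_two_mul (hA : 0 < A) (hpos : ∀ n, 0 < a n) (hs : Summable a)
    (hh : MonotoneOn h (Ioc 0 A)) :
    limsup (tailSeq h a) atTop ≤ 2 * limsup (dyadicTailSeq h a) atTop := by
  have hsmall : ∀ᶠ k in atTop, avgLen a k ≤ A :=
    (tendsto_avgLen (fun n => (hpos n).le) hs).eventually_le_const hA
  calc limsup (tailSeq h a) atTop
      ≤ limsup (fun n => 2 * dyadicTailSeq h a (Nat.log 2 (n + 1))) atTop :=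
        limsup_le_limsup <| (tendsto_log_two_succ_atTop.eventually hsmall).mono fun n hn =>
          tailSeq_le_two_mul_dyadicTailSeq hpos hs hh (Nat.pow_log_le_self 2 n.succ_ne_zero)
            (Nat.lt_pow_succ_log_self one_lt_two _) hn
    _ = 2 * limsup (dyadicTailSeq h a ∘ fun n => Nat.log 2 (n + 1)) atTop :=
        ENNReal.limsup_const_mul_of_ne_top ENNReal.ofNat_ne_top
    _ ≤ 2 * limsup (dyadicTailSeq h a) atTop := by
        gcongr
        exact tendsto_log_two_succ_atTop.limsup_comp_le_limsup

end DyadicTails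

/-! ### Comparison of the packing measure with the limsup -/

section Comparison

variable {A : ℝ} {h : ℝ → ℝ≥0∞} {a : ℕ → ℝ} {τ : ℝ≥0∞}

theorem mul_le_Ph_cantorSetOf_of_frequently (hA : 0 < A) (hpos : ∀ n, 0 < a n) (ha : Antitone a)
    (hs : Summable a) (hτ : ∀ x : ℝ, 0 < x → 2 * x ≤ A → τ * h (2 * x) ≤ h x) {D : ℝ≥0∞}
    (hD : ∃ᶠ k in atTop, D ≤ dyadicTailSeq h a k) :
    τ / 4 * D ≤ Ph A h (cantorSetOf a) := by
  have hzero := tendsto_avgLen (fun n => (hpos n).le) hs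
  have hradius : Tendsto (fun k => avgLen a k / 4) atTop (𝓝[>] 0) :=
    tendsto_nhdsWithin_iff.2 ⟨by simpa only [zero_div] using hzero.div_const 4,
      .of_forall fun k => div_pos (avgLen_pos hpos hs k) four_pos⟩
  have hlarge : ∀ᶠ k in atTop, avgLen a k ≤ A ∧ 1 ≤ k :=
    (hzero.eventually_le_const hA).and (eventually_ge_atTop 1)
  have hball : ∃ᶠ ρ in 𝓝[>] (0 : ℝ), ∀ x ∈ cantorSetOf a,
      τ / 4 * D * cantorMeasure a (ball x (2 * ρ)) ≤ h (2 * ρ) := by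
    refine hradius.frequently ((hD.and_eventually hlarge).mono ?_)
    rintro k ⟨hDk, hkA, hk⟩ x -
    obtain ⟨m, rfl⟩ := Nat.exists_eq_add_of_le' hk
    rw [show 2 * (avgLen a (m + 1) / 4) = avgLen a (m + 1) / 2 by ring]
    have hdouble := hτ (avgLen a (m + 1) / 2) (half_pos (avgLen_pos hpos hs _)) (by linarith)
    rw [mul_div_cancel₀ _ (two_ne_zero' ℝ)] at hdouble
    calc τ / 4 * D * cantorMeasure a (ball x (avgLen a (m + 1) / 2))
        ≤ τ / 4 * (2 ^ (m + 1) * h (avgLen a (m + 1))) * (2 * (2 ^ m)⁻¹) := by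
          gcongr
          · exact hDk
          · exact cantorMeasure_ball_le ha hs x (by linarith)
      _ = (4⁻¹ * 4) * (2 ^ m * (2 ^ m)⁻¹) * (τ * h (avgLen a (m + 1))) := by
          rw [div_eq_mul_inv, pow_succ]; ring
      _ = τ * h (avgLen a (m + 1)) := by
          rw [ENNReal.inv_mul_cancel (by norm_num) (by norm_num),
            ENNReal.mul_inv_cancel (by positivity) (by finiteness), one_mul, one_mul]
      _ ≤ h (avgLen a (m + 1) / 2) := hdouble
  calc τ / 4 * D ≤ τ / 4 * D * cantorMeasure a (cantorSetOf a) :=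
        le_mul_of_one_le_right' (one_le_cantorMeasure_cantorSetOf ha hs)
    _ ≤ Ph A h (cantorSetOf a) := mul_measure_le_Ph hball

theorem exists_lt_le_of_tendsto_zero {u : ℕ → ℝ} (hu : Tendsto u atTop (𝓝 0)) {ρ : ℝ} (hρ : 0 < ρ)
    {K : ℕ} (hK : ρ ≤ u K) : ∃ k ≥ K, u (k + 1) < ρ ∧ ρ ≤ u k := by
  by_contra! hcon
  have hge : ∀ k ≥ K, ρ ≤ u k := fun k hk => by
    induction k, hk using Nat.le_induction with
    | base => exact hK
    | succ k hk ih => exact not_lt.1 fun hlt => (hcon k hk hlt).not_ge ih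
  exact hρ.not_ge (ge_of_tendsto hu (eventually_atTop.2 ⟨K, hge⟩))

theorem P0h_cantorSetOf_le_of_eventually (hA : 0 < A) (hpos : ∀ n, 0 < a n) (ha : Antitone a)
    (hs : Summable a) (hh : MonotoneOn h (Ioc 0 A)) (hτ0 : τ ≠ 0) (hτt : τ ≠ ∞)
    (hτ : ∀ x : ℝ, 0 < x → 2 * x ≤ A → τ * h (2 * x) ≤ h x) {B : ℝ≥0∞}
    (hB : ∀ᶠ k in atTop, dyadicTailSeq h a k ≤ B) :
    P0h A h (cantorSetOf a) ≤ 4 * τ⁻¹ * B := by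
  have hzero := tendsto_avgLen (fun n => (hpos n).le) hs
  obtain ⟨K, hK⟩ := eventually_atTop.1 (hB.and (hzero.eventually_le_const (half_pos hA)))
  have hball : ∀ᶠ ρ in 𝓝[>] (0 : ℝ), ∀ x ∈ cantorSetOf a,
      h (2 * ρ) ≤ 4 * τ⁻¹ * B * cantorMeasure a (ball x ρ) := by
    filter_upwards [Ioo_mem_nhdsGT (avgLen_pos hpos hs K)] with ρ ⟨hρ, hρK⟩ x hx
    obtain ⟨k, hk, hlt, hle⟩ := exists_lt_le_of_tendsto_zero hzero hρ hρK.le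
    obtain ⟨hkB, hkA⟩ := hK k hk
    have hkA' : 2 * avgLen a k ≤ A := by linarith
    calc h (2 * ρ) ≤ h (2 * avgLen a k) :=
          hh ⟨by linarith, by linarith⟩ ⟨by linarith, hkA'⟩ (by linarith)
      _ ≤ τ⁻¹ * h (avgLen a k) :=
          (ENNReal.mul_le_iff_le_inv hτ0 hτt).1 (hτ _ (avgLen_pos hpos hs k) hkA')
      _ ≤ τ⁻¹ * ((2 ^ k)⁻¹ * B) := by
          gcongr
          exact (ENNReal.mul_le_iff_le_inv (by positivity) (by finiteness)).1 hkB
      _ = (4 * 4⁻¹) * (τ⁻¹ * ((2 ^ k)⁻¹ * B)) := by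
          rw [ENNReal.mul_inv_cancel (by norm_num) (by norm_num), one_mul]
      _ = 4 * τ⁻¹ * B * (2 ^ (k + 2))⁻¹ := by
          rw [pow_add, ENNReal.mul_inv (by simp) (by simp)]
          norm_num
          ring
      _ ≤ 4 * τ⁻¹ * B * cantorMeasure a (ball x ρ) := by
          gcongr
          exact inv_two_pow_le_cantorMeasure_ball ha hs hx hlt
  simpa only [cantorMeasure_univ, mul_one] using P0h_le_mul_measure_univ hA hball

theorem mul_limsup_tailSeq_le_Ph_cantorSetOf (hA : 0 < A) (hpos : ∀ n, 0 < a n) (ha : Antitone a)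
    (hs : Summable a) (hh : MonotoneOn h (Ioc 0 A))
    (hτ : ∀ x : ℝ, 0 < x → 2 * x ≤ A → τ * h (2 * x) ≤ h x) :
    τ / 8 * limsup (tailSeq h a) atTop ≤ Ph A h (cantorSetOf a) := by
  have hdyadic : τ / 4 * limsup (dyadicTailSeq h a) atTop ≤ Ph A h (cantorSetOf a) :=
    ENNReal.mul_le_of_forall_lt fun c hc D hD => (mul_le_mul_left hc.le D).trans <|
      mul_le_Ph_cantorSetOf_of_frequently hA hpos ha hs hτ <|
        (frequently_lt_of_lt_limsup (by isBoundedDefault) hD).mono fun _ => le_of_lt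
  have hconst : τ / 8 * 2 = τ / 4 := by
    rw [show (8 : ℝ≥0∞) = 4 * 2 by norm_num, div_eq_mul_inv, div_eq_mul_inv,
      ENNReal.mul_inv (by simp) (by simp), mul_assoc, mul_assoc,
      ENNReal.inv_mul_cancel (by simp) (by simp), mul_one]
  calc τ / 8 * limsup (tailSeq h a) atTop
      ≤ τ / 8 * (2 * limsup (dyadicTailSeq h a) atTop) := by
        gcongr
        exact limsup_tailSeq_le_two_mul hA hpos hs hh
    _ = τ / 4 * limsup (dyadicTailSeq h a) atTop := by rw [← mul_assoc, hconst]
    _ ≤ Ph A h (cantorSetOf a) := hdyadic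

theorem Ph_cantorSetOf_le_mul_limsup_tailSeq (hA : 0 < A) (hpos : ∀ n, 0 < a n) (ha : Antitone a)
    (hs : Summable a) (hh : MonotoneOn h (Ioc 0 A)) (hτ0 : τ ≠ 0) (hτt : τ ≠ ∞)
    (hτ : ∀ x : ℝ, 0 < x → 2 * x ≤ A → τ * h (2 * x) ≤ h x) :
    Ph A h (cantorSetOf a) ≤ 4 * τ⁻¹ * limsup (tailSeq h a) atTop := by
  have hc0 : 4 * τ⁻¹ ≠ 0 := mul_ne_zero (by norm_num) (ENNReal.inv_ne_zero.2 hτt)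
  have hct : 4 * τ⁻¹ ≠ ∞ := ENNReal.mul_ne_top (by norm_num) (ENNReal.inv_ne_top.2 hτ0)
  refine ENNReal.le_mul_of_forall_lt (.inl hc0) (.inl hct) fun c hc B hB => ?_
  have hdyadic : ∀ᶠ k in atTop, dyadicTailSeq h a k ≤ B :=
    (eventually_lt_of_limsup_lt ((limsup_dyadicTailSeq_le h a).trans_lt hB)).mono fun _ => le_of_lt
  calc Ph A h (cantorSetOf a) ≤ P0h A h (cantorSetOf a) := Ph_le_P0h hA _
    _ ≤ 4 * τ⁻¹ * B := P0h_cantorSetOf_le_of_eventually hA hpos ha hs hh hτ0 hτt hτ hdyadic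
    _ ≤ c * B := by gcongr

end Comparison

theorem eq_zero_iff_of_mul_le_of_le_mul {c K x y : ℝ≥0∞} (hc : c ≠ 0) (hlo : c * y ≤ x)
    (hhi : x ≤ K * y) : x = 0 ↔ y = 0 :=
  ⟨fun hx => (mul_eq_zero.1 (le_zero_iff.1 (hx ▸ hlo))).resolve_left hc,
    fun hy => by simpa [hy] using hhi⟩

theorem eq_top_iff_of_mul_le_of_le_mul {c K x y : ℝ≥0∞} (hc : c ≠ 0) (hK : K ≠ ∞)
    (hlo : c * y ≤ x) (hhi : x ≤ K * y) : x = ∞ ↔ y = ∞ :=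
  ⟨fun hx => of_not_not fun hy => ENNReal.mul_ne_top hK hy (top_le_iff.1 (hx ▸ hhi)),
    fun hy => by simpa [hy, ENNReal.mul_top hc] using hlo⟩

theorem packing_trichotomy_cantor_general {A : ℝ} {a : ℕ → ℝ} {h : ℝ → ℝ≥0∞}
    (hpos : ∀ n, 0 < a n) (ha : Antitone a) (hs : Summable a) (hA : 0 < A)
    (hh : MonotoneOn h (Ioc 0 A))
    (hdouble : ∃ τ : ℝ≥0∞, 0 < τ ∧ τ ≠ ∞ ∧ ∀ x : ℝ, 0 < x → 2 * x ≤ A → τ * h (2 * x) ≤ h x) :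
    (Ph A h (cantorSetOf a) = 0 ↔ limsup (tailSeq h a) atTop = 0) ∧
    (Ph A h (cantorSetOf a) = ∞ ↔ limsup (tailSeq h a) atTop = ∞) ∧
    (0 < Ph A h (cantorSetOf a) ∧ Ph A h (cantorSetOf a) < ∞ ↔
      0 < limsup (tailSeq h a) atTop ∧ limsup (tailSeq h a) atTop < ∞) := by
  obtain ⟨τ, hτ0, hτt, hτ⟩ := hdouble
  have hlo := mul_limsup_tailSeq_le_Ph_cantorSetOf hA hpos ha hs hh hτ
  have hhi := Ph_cantorSetOf_le_mul_limsup_tailSeq hA hpos ha hs hh hτ0.ne' hτt hτ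
  have hc : τ / 8 ≠ 0 := (ENNReal.div_pos hτ0.ne' (by norm_num)).ne'
  have hK : 4 * τ⁻¹ ≠ ∞ := ENNReal.mul_ne_top (by norm_num) (ENNReal.inv_ne_top.2 hτ0.ne')
  have hzero := eq_zero_iff_of_mul_le_of_le_mul hc hlo hhi
  have htop := eq_top_iff_of_mul_le_of_le_mul hc hK hlo hhi
  exact ⟨hzero, htop, by simp only [pos_iff_ne_zero, lt_top_iff_ne_top, ne_eq, hzero, htop]⟩

end

/-- Theorem, packing part: for the Cantor set `C_a` and any
dimension function `h`, `P^h(C_a)` is zero / infinite / positive-finite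
according as `limsup_n n·h(rₙ/n)` is zero / infinite / positive-finite.
(0-based indices: the paper's `n·h(rₙ/n)` is `(n+1)·h(rTail a n/(n+1))`.) -/
theorem packing_trichotomy_cantor (A : ℝ) (a : ℕ → ℝ)
    (apos : ∀ n, 0 < a n) (amono : ∀ n, a (n + 1) ≤ a n) (asum : Summable a)
    (h : ℝ → ℝ≥0∞) (hd : IsDimFun A h) :
    (Ph A h (cantorSetOf a) = 0 ↔
      Filter.limsup
        (fun n : ℕ => ((n : ℝ≥0∞) + 1) * h (rTail a n / ((n : ℝ) + 1)))
        Filter.atTop = 0) ∧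
    (Ph A h (cantorSetOf a) = ∞ ↔
      Filter.limsup
        (fun n : ℕ => ((n : ℝ≥0∞) + 1) * h (rTail a n / ((n : ℝ) + 1)))
        Filter.atTop = ∞) ∧
    (0 < Ph A h (cantorSetOf a) ∧ Ph A h (cantorSetOf a) < ∞ ↔
      0 < Filter.limsup
        (fun n : ℕ => ((n : ℝ≥0∞) + 1) * h (rTail a n / ((n : ℝ) + 1)))
        Filter.atTop ∧
      Filter.limsup
        (fun n : ℕ => ((n : ℝ≥0∞) + 1) * h (rTail a n / ((n : ℝ) + 1)))
        Filter.atTop < ∞) :=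
  packing_trichotomy_cantor_general apos (antitone_nat_of_succ_le amono) asum hd.posA
    hd.strictMonoOn.monotoneOn hd.doubling
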